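/- arXiv:0803.3469 — 2 statements merged into one kernel-verified Lean document; each statement's English description precedes it below -/
import Mathlib

section
/- The genus 4 ansatz Ξ^{(4)} = (1/16)(G₀^{(4)} − G₁^{(4)} + 2G₂^{(4)} − 8G₃^{(4)} + 64G₄^{(4)}) satisfies both factorization constraints: for every τ₁ ∈ ℍ₁ and τ₂ ∈ ℍ₃ one has Ξ^{(4)}(τ₁ ⊕ τ₂) = Ξ^{(1)}(τ₁) · Ξ^{(3)}(τ₂), and for every σ₁, σ₂ ∈ ℍ₂ one has Ξ^{(4)}(σ₁ ⊕ σ₂) = Ξ^{(2)}(σ₁) · Ξ^{(2)}(σ₂), where ⊕ denotes forming the block-diagonal period matrix. -/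
open scoped BigOperators

abbrev ThetaChar (g : ℕ) := (Fin g → ZMod 2) × (Fin g → ZMod 2)

/-- Theta constant with characteristic `v = [ε; δ]`. -/
noncomputable def theta {g : ℕ} (v : ThetaChar g) (τ : Matrix (Fin g) (Fin g) ℂ) : ℂ :=
  ∑' n : Fin g → ℤ,
    Complex.exp ((Real.pi : ℂ) * Complex.I *
      ((∑ i, ∑ j, ((n i : ℂ) + ((v.1 i).val : ℂ) / 2) * τ i j *
          ((n j : ℂ) + ((v.1 j).val : ℂ) / 2)) +
        ∑ i, ((n i : ℂ) + ((v.1 i).val : ℂ) / 2) * ((v.2 i).val : ℂ)))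

/-- Siegel upper half-space membership. -/
def IsSiegel {g : ℕ} (τ : Matrix (Fin g) (Fin g) ℂ) : Prop :=
  τ.IsSymm ∧ Matrix.PosDef (τ.map Complex.im)

noncomputable def Pset {g : ℕ} (M : Set (ThetaChar g)) (τ : Matrix (Fin g) (Fin g) ℂ) : ℂ :=
  ∏ᶠ v ∈ M, theta v τ

noncomputable def Pform (g i s : ℕ) (τ : Matrix (Fin g) (Fin g) ℂ) : ℂ :=
  ∑ᶠ V ∈ {V : Submodule (ZMod 2) (ThetaChar g) | Module.finrank (ZMod 2) ↥V = i},
    Pset (V : Set (ThetaChar g)) τ ^ s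

noncomputable def Nsub (n m i : ℕ) : ℕ :=
  Nat.card {V : Submodule (ZMod 2) ((Fin n → ZMod 2) × (Fin m → ZMod 2)) //
    Module.finrank (ZMod 2) ↥V = i ∧
    V.map (LinearMap.fst (ZMod 2) (Fin n → ZMod 2) (Fin m → ZMod 2)) = ⊤ ∧
    V.map (LinearMap.snd (ZMod 2) (Fin n → ZMod 2) (Fin m → ZMod 2)) = ⊤}

noncomputable def blockDiag {k l : ℕ} (τ₁ : Matrix (Fin k) (Fin k) ℂ)
    (τ₂ : Matrix (Fin l) (Fin l) ℂ) : Matrix (Fin (k + l)) (Fin (k + l)) ℂ :=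
  Matrix.reindex finSumFinEquiv finSumFinEquiv (Matrix.fromBlocks τ₁ 0 0 τ₂)

def chproj1 (k l : ℕ) : ThetaChar (k + l) →ₗ[ZMod 2] ThetaChar k :=
  (LinearMap.funLeft (ZMod 2) (ZMod 2) (Fin.castAdd l)).prodMap
    (LinearMap.funLeft (ZMod 2) (ZMod 2) (Fin.castAdd l))

def chproj2 (k l : ℕ) : ThetaChar (k + l) →ₗ[ZMod 2] ThetaChar l :=
  (LinearMap.funLeft (ZMod 2) (ZMod 2) (Fin.natAdd k)).prodMap
    (LinearMap.funLeft (ZMod 2) (ZMod 2) (Fin.natAdd k))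

def weil {g : ℕ} (v w : ThetaChar g) : ZMod 2 :=
  (∑ i, v.1 i * w.2 i) + (∑ i, v.2 i * w.1 i)

def evenChar {g : ℕ} (v : ThetaChar g) : Prop := (∑ i, v.1 i * v.2 i) = 0

def qform {g : ℕ} (Δ v : ThetaChar g) : ZMod 2 :=
  (∑ i, v.1 i * v.2 i) + (∑ i, Δ.1 i * v.2 i) + (∑ i, Δ.2 i * v.1 i)

noncomputable def Gform (g i : ℕ) (τ : Matrix (Fin g) (Fin g) ℂ) : ℂ :=
  Pform g i (2 ^ (4 - i)) τ

noncomputable def Xi1 (τ : Matrix (Fin 1) (Fin 1) ℂ) : ℂ :=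
  (1 / 2) * (Gform 1 0 τ - Gform 1 1 τ)

noncomputable def Xi2 (τ : Matrix (Fin 2) (Fin 2) ℂ) : ℂ :=
  (1 / 4) * (Gform 2 0 τ - Gform 2 1 τ + 2 * Gform 2 2 τ)

noncomputable def Xi3 (τ : Matrix (Fin 3) (Fin 3) ℂ) : ℂ :=
  (1 / 8) * (Gform 3 0 τ - Gform 3 1 τ + 2 * Gform 3 2 τ - 8 * Gform 3 3 τ)

noncomputable def Xi4 (τ : Matrix (Fin 4) (Fin 4) ℂ) : ℂ :=
  (1 / 16) * (Gform 4 0 τ - Gform 4 1 τ + 2 * Gform 4 2 τ - 8 * Gform 4 3 τ +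
    64 * Gform 4 4 τ)


lemma quad_lower {g : ℕ} (Y : Matrix (Fin g) (Fin g) ℝ) (hY : Y.PosDef) :
    ∃ c : ℝ, 0 < c ∧ ∀ x : Fin g → ℝ, c * ∑ i, x i ^ 2 ≤ ∑ i, ∑ j, x i * Y i j * x j := by
  have hpos : ∀ x : Fin g → ℝ, x ≠ 0 → 0 < ∑ i, ∑ j, x i * Y i j * x j := by
    intro x hx
    have := hY.dotProduct_mulVec_pos hx
    simpa [dotProduct, Matrix.mulVec, Finset.mul_sum, mul_assoc] using this
  set Q : (Fin g → ℝ) → ℝ := fun x => ∑ i, ∑ j, x i * Y i j * x j with hQ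
  have hQc : Continuous Q := by fun_prop
  have key : ∃ c : ℝ, 0 < c ∧ ∀ x ∈ Metric.sphere (0 : Fin g → ℝ) 1, c ≤ Q x := by
    by_cases hne : (Metric.sphere (0 : Fin g → ℝ) 1).Nonempty
    · obtain ⟨x0, hx0, hmin⟩ :=
        (isCompact_sphere (0 : Fin g → ℝ) 1).exists_isMinOn hne hQc.continuousOn
      refine ⟨Q x0, hpos x0 ?_, fun x hx => hmin hx⟩
      rintro rfl
      simp at hx0
    · exact ⟨1, one_pos, fun x hx => (hne ⟨x, hx⟩).elim⟩
  obtain ⟨c, hc, hcx⟩ := key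
  have hhom : ∀ x, c * ‖x‖ ^ 2 ≤ Q x := by
    intro x
    by_cases hx : x = 0
    · subst hx; simp [hQ]
    have hn : 0 < ‖x‖ := norm_pos_iff.mpr hx
    have h1 := hcx (‖x‖⁻¹ • x) (by simp [norm_smul, hn.ne'])
    have h2 : Q (‖x‖⁻¹ • x) = (‖x‖⁻¹) ^ 2 * Q x := by
      simp only [hQ, Finset.mul_sum, Pi.smul_apply, smul_eq_mul]
      refine Finset.sum_congr rfl fun i _ => Finset.sum_congr rfl fun j _ => by ring
    rw [h2] at h1
    have h3 := mul_le_mul_of_nonneg_left h1 (sq_nonneg ‖x‖)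
    have h4 : ‖x‖ ^ 2 * ((‖x‖⁻¹) ^ 2 * Q x) = Q x := by field_simp
    rw [h4] at h3
    linarith
  refine ⟨c / (g + 1), by positivity, fun x => ?_⟩
  have hs : ∑ i, x i ^ 2 ≤ g * ‖x‖ ^ 2 := by
    calc ∑ i, x i ^ 2 ≤ ∑ _i : Fin g, ‖x‖ ^ 2 := by
          refine Finset.sum_le_sum fun i _ => ?_
          rw [← sq_abs]
          exact pow_le_pow_left₀ (abs_nonneg _) (norm_le_pi_norm x i) 2
      _ = g * ‖x‖ ^ 2 := by simp
  calc c / (g + 1) * ∑ i, x i ^ 2 ≤ c / (g + 1) * ((g + 1) * ‖x‖ ^ 2) := by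
        refine mul_le_mul_of_nonneg_left ?_ (by positivity)
        nlinarith [sq_nonneg ‖x‖]
    _ = c * ‖x‖ ^ 2 := by field_simp
    _ ≤ Q x := hhom x

lemma summable_gauss (b a : ℝ) (hb : 0 < b) :
    Summable fun n : ℤ => Real.exp (-b * ((n : ℝ) + a) ^ 2) := by
  have h := (summable_jacobiTheta₂_term_iff (Complex.I * ((a * b / Real.pi : ℝ) : ℂ))
    (Complex.I * ((b / Real.pi : ℝ) : ℂ))).2 (by simp; positivity)
  have h2 := h.norm.mul_left (Real.exp (-b * a ^ 2))
  refine h2.congr fun n => ?_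
  rw [norm_jacobiTheta₂_term, ← Real.exp_add]
  congr 1
  simp
  have := Real.pi_ne_zero
  field_simp
  ring

lemma summable_pi_prod {g : ℕ} (f : Fin g → ℤ → ℝ) (h0 : ∀ i n, 0 ≤ f i n)
    (hf : ∀ i, Summable (f i)) : Summable fun n : Fin g → ℤ => ∏ i, f i (n i) := by
  induction g with
  | zero => exact Summable.of_finite
  | succ g ih =>
    have h1 := ih (fun i => f i.succ) (fun i n => h0 _ _) (fun i => hf _)
    have h2 := (hf 0).mul_of_nonneg h1 (fun n => h0 0 n)
      (fun n => Finset.prod_nonneg fun i _ => h0 _ _)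
    rw [← (Fin.consEquiv fun _ : Fin (g + 1) => ℤ).summable_iff]
    refine h2.congr fun n => ?_
    simp [Fin.prod_univ_succ, Fin.consEquiv]

noncomputable def thetaTerm {g : ℕ} (v : ThetaChar g) (τ : Matrix (Fin g) (Fin g) ℂ)
    (n : Fin g → ℤ) : ℂ :=
    Complex.exp ((Real.pi : ℂ) * Complex.I *
      ((∑ i, ∑ j, ((n i : ℂ) + ((v.1 i).val : ℂ) / 2) * τ i j *
          ((n j : ℂ) + ((v.1 j).val : ℂ) / 2)) +
        ∑ i, ((n i : ℂ) + ((v.1 i).val : ℂ) / 2) * ((v.2 i).val : ℂ)))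

lemma theta_eq {g : ℕ} (v : ThetaChar g) (τ : Matrix (Fin g) (Fin g) ℂ) :
    theta v τ = ∑' n, thetaTerm v τ n := rfl

lemma thetaTerm_summable {g : ℕ} (v : ThetaChar g) (τ : Matrix (Fin g) (Fin g) ℂ)
    (hτ : IsSiegel τ) : Summable fun n => ‖thetaTerm v τ n‖ := by
  obtain ⟨c, hc, hq⟩ := quad_lower _ hτ.2
  have hs := summable_pi_prod
    (fun (i : Fin g) (n : ℤ) => Real.exp (-(Real.pi * c) * ((n : ℝ) + ((v.1 i).val : ℝ) / 2) ^ 2))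
    (fun _ _ => (Real.exp_pos _).le) (fun i => summable_gauss _ _ (by positivity))
  refine Summable.of_nonneg_of_le (fun _ => norm_nonneg _) (fun n => ?_) hs
  rw [← Real.exp_sum, thetaTerm, Complex.norm_exp]
  apply Real.exp_le_exp.2
  have h1 := hq (fun i => (n i : ℝ) + ((v.1 i).val : ℝ) / 2)
  have hre : ∀ i, ((n i : ℂ) + ((v.1 i).val : ℂ) / 2) =
      (((n i : ℝ) + ((v.1 i).val : ℝ) / 2 : ℝ) : ℂ) := fun i => by push_cast; rfl
  have h2 : ((Real.pi : ℂ) * Complex.I *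
      ((∑ i, ∑ j, ((n i : ℂ) + ((v.1 i).val : ℂ) / 2) * τ i j *
          ((n j : ℂ) + ((v.1 j).val : ℂ) / 2)) +
        ∑ i, ((n i : ℂ) + ((v.1 i).val : ℂ) / 2) * ((v.2 i).val : ℂ))).re =
      -Real.pi * ∑ i, ∑ j, ((n i : ℝ) + ((v.1 i).val : ℝ) / 2) * (τ.map Complex.im) i j *
        ((n j : ℝ) + ((v.1 j).val : ℝ) / 2) := by
    simp only [hre]
    simp only [mul_assoc, Complex.re_ofReal_mul, Complex.I_mul_re, Complex.add_im, Complex.im_sum,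
      Complex.im_ofReal_mul, Complex.im_mul_ofReal, Complex.natCast_im, mul_zero,
      Finset.sum_const_zero, add_zero, Matrix.map_apply]
    ring
  rw [h2, ← Finset.mul_sum]
  nlinarith [Real.pi_pos]

lemma theta_block {k l : ℕ} (τ₁ : Matrix (Fin k) (Fin k) ℂ) (τ₂ : Matrix (Fin l) (Fin l) ℂ)
    (h₁ : IsSiegel τ₁) (h₂ : IsSiegel τ₂) (v : ThetaChar (k + l)) :
    theta v (blockDiag τ₁ τ₂) = theta (chproj1 k l v) τ₁ * theta (chproj2 k l v) τ₂ := by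
  simp only [theta_eq]
  rw [tsum_mul_tsum_of_summable_norm (thetaTerm_summable _ _ h₁) (thetaTerm_summable _ _ h₂),
    ← (Fin.appendEquiv k l).tsum_eq]
  refine tsum_congr fun p => ?_
  obtain ⟨n, m⟩ := p
  simp only [thetaTerm, ← Complex.exp_add]
  congr 1
  simp [Fin.sum_univ_add, blockDiag, Fin.appendEquiv, chproj1, chproj2, LinearMap.funLeft]
  ring

lemma theta_odd {g : ℕ} (v : ThetaChar g) (τ : Matrix (Fin g) (Fin g) ℂ)
    (hv : ¬ evenChar v) : theta v τ = 0 := by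
  have key : theta v τ = - theta v τ := by
    let e : (Fin g → ℤ) ≃ (Fin g → ℤ) :=
      { toFun := fun n i => - n i - (v.1 i).val
        invFun := fun n i => - n i - (v.1 i).val
        left_inv := fun n => by ext; simp
        right_inv := fun n => by ext; simp }
    conv_lhs => rw [theta_eq, ← e.tsum_eq]
    rw [theta_eq, ← tsum_neg]
    refine tsum_congr fun n => ?_
    have hodd : Odd (∑ i, (2 * n i + (v.1 i).val) * ((v.2 i).val : ℤ)) := by
      rw [← Int.not_even_iff_odd, ← ZMod.intCast_eq_zero_iff_even]
      intro h
      apply hv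
      have h2 : (2 : ZMod 2) = 0 := by decide
      push_cast at h
      simpa [h2, evenChar] using h
    obtain ⟨r, hr⟩ := hodd
    have hr' : (∑ i, (2 * (n i : ℂ) + ((v.1 i).val : ℂ)) * ((v.2 i).val : ℂ)) = 2 * (r : ℂ) + 1 := by
      exact_mod_cast hr
    have : thetaTerm v τ (e n) * Complex.exp ((r : ℂ) * (2 * Real.pi * Complex.I)
        + Real.pi * Complex.I) = thetaTerm v τ n := by
      simp only [thetaTerm, ← Complex.exp_add]
      congr 1
      have e1 : (r : ℂ) * (2 * Real.pi * Complex.I) + Real.pi * Complex.I =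
        Real.pi * Complex.I * (2 * (r : ℂ) + 1) := by ring
      rw [e1, ← hr', ← mul_add, add_assoc, ← Finset.sum_add_distrib]
      congr 2
      · refine Finset.sum_congr rfl fun i _ => Finset.sum_congr rfl fun j _ => ?_
        simp only [e, Equiv.coe_fn_mk]
        push_cast
        ring
      · refine Finset.sum_congr rfl fun i _ => ?_
        simp only [e, Equiv.coe_fn_mk]
        push_cast
        ring
    rw [← this, Complex.exp_add, Complex.exp_int_mul_two_pi_mul_I, Complex.exp_pi_mul_I]
    simp
  exact self_eq_neg.mp key

noncomputable def cf (i : ℕ) : ℂ := (-1) ^ i * 2 ^ (i.choose 2)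

lemma cf_succ (i : ℕ) : cf (i + 1) + 2 ^ i * cf i = 0 := by
  simp only [cf, Nat.choose_succ_succ' i 1, Nat.choose_one_right]
  ring

section mob
variable {E : Type*} [AddCommGroup E] [Module (ZMod 2) E] [Finite E]

lemma compl_card (L : Submodule (ZMod 2) E) (hL : Module.finrank (ZMod 2) L = 1) :
    Nat.card {q // IsCompl L q} * 2 = 2 ^ Module.finrank (ZMod 2) E := by
  classical
  rw [Nat.card_congr (Submodule.isComplEquivProj L)]
  let φ : (E →ₗ[ZMod 2] L) →ₗ[ZMod 2] (L →ₗ[ZMod 2] L) := LinearMap.lcomp _ _ L.subtype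
  obtain ⟨q, hq⟩ := Submodule.exists_isCompl L
  let p0 := Submodule.isComplEquivProj L ⟨q, hq⟩
  have e1 : Nat.card {f : E →ₗ[ZMod 2] L // ∀ x : L, f x = x} = Nat.card (LinearMap.ker φ) := by
    refine Nat.card_congr ⟨fun f => ⟨f.1 - p0.1, ?_⟩, fun f => ⟨f.1 + p0.1, ?_⟩, ?_, ?_⟩
    · rw [LinearMap.mem_ker]
      ext x
      have h1 := f.2 x
      have h2 := p0.2 x
      simp [φ, h1, h2]
    · intro x
      have h1 : φ f.1 x = 0 := by rw [LinearMap.mem_ker.1 f.2]; rfl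
      have h2 := p0.2 x
      rw [LinearMap.add_apply, h2]
      have h3 : f.1 x = 0 := h1
      rw [h3, zero_add]
    · intro f; ext; simp
    · intro f; ext; simp
  have hsurj : LinearMap.range φ = ⊤ := by
    rw [LinearMap.range_eq_top]
    intro f
    refine ⟨f ∘ₗ p0.1, ?_⟩
    ext x
    have h2 := p0.2 x
    simp [φ, h2]
  have hr := LinearMap.finrank_range_add_finrank_ker φ
  rw [hsurj, finrank_top, Module.finrank_linearMap, Module.finrank_linearMap, hL] at hr
  have : Module.Finite (ZMod 2) (LinearMap.ker φ) := inferInstance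
  rw [e1, Module.natCard_eq_pow_finrank (K := ZMod 2), Nat.card_zmod, ← pow_succ]
  congr 1
  omega

lemma compl_card_rel (v : E) (hv : v ≠ 0) (U : Submodule (ZMod 2) E) (hU : v ∈ U) :
    Nat.card {W : Submodule (ZMod 2) E // W ⊔ Submodule.span (ZMod 2) {v} = U ∧ v ∉ W} * 2 =
      2 ^ Module.finrank (ZMod 2) U := by
  set L := Submodule.span (ZMod 2) {v} with hLdef
  have hLU : L ≤ U := by simpa [hLdef] using hU
  let L' : Submodule (ZMod 2) U := (Submodule.mapIic U).symm ⟨L, hLU⟩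
  have hmap : Submodule.mapIic U L' = ⟨L, hLU⟩ := by simp [L']
  have hL' : Module.finrank (ZMod 2) L' = 1 := by
    have h1 : L'.map U.subtype = L := congrArg Subtype.val hmap
    rw [LinearEquiv.finrank_eq (Submodule.equivMapOfInjective U.subtype U.subtype_injective L'),
      h1, finrank_span_singleton hv]
  rw [← compl_card L' hL']
  congr 1
  have hdis : ∀ W : Submodule (ZMod 2) E, v ∉ W ↔ Disjoint L W := by
    intro W
    rw [hLdef, disjoint_comm, Submodule.disjoint_span_singleton' hv]
  have hiff : ∀ q : Submodule (ZMod 2) U, IsCompl L' q ↔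
      (q.map U.subtype ⊔ L = U ∧ v ∉ q.map U.subtype) := by
    intro q
    rw [(Submodule.mapIic U).isCompl_iff, hmap, Set.Iic.isCompl_iff, hdis, and_comm, sup_comm]
    rfl
  have hle : ∀ W : {W : Submodule (ZMod 2) E // W ⊔ L = U ∧ v ∉ W}, W.1 ≤ U :=
    fun W => le_sup_left.trans W.2.1.le
  have hback : ∀ W : {W : Submodule (ZMod 2) E // W ⊔ L = U ∧ v ∉ W},
      ((Submodule.mapIic U).symm ⟨W.1, hle W⟩).map U.subtype = W.1 := fun W =>
    congrArg Subtype.val ((Submodule.mapIic U).apply_symm_apply ⟨W.1, hle W⟩)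
  let e : {q : Submodule (ZMod 2) U // IsCompl L' q} ≃
      {W : Submodule (ZMod 2) E // W ⊔ L = U ∧ v ∉ W} :=
    { toFun := fun q => ⟨q.1.map U.subtype, (hiff _).1 q.2⟩
      invFun := fun W => ⟨(Submodule.mapIic U).symm ⟨W.1, hle W⟩, (hiff _).2 (by
        rw [hback W]; exact W.2)⟩
      left_inv := fun q => Subtype.ext ((Submodule.mapIic U).symm_apply_apply q.1)
      right_inv := fun W => Subtype.ext (hback W) }
  exact (Nat.card_congr e).symm

open Classical in
lemma fiber_sum [Fintype (Submodule (ZMod 2) E)] (v : E) (hv : v ≠ 0)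
    (U : Submodule (ZMod 2) E) (hU : v ∈ U) :
    ∑ W ∈ Finset.univ.filter (fun W : Submodule (ZMod 2) E =>
      W ⊔ Submodule.span (ZMod 2) {v} = U), cf (Module.finrank (ZMod 2) W) = 0 := by
  set L := Submodule.span (ZMod 2) {v} with hLdef
  have hLle : ∀ W : Submodule (ZMod 2) E, L ≤ W ↔ v ∈ W := by
    intro W; simp [hLdef]
  have hset : Finset.univ.filter (fun W : Submodule (ZMod 2) E => W ⊔ L = U) =
      insert U (Finset.univ.filter (fun W : Submodule (ZMod 2) E => W ⊔ L = U ∧ v ∉ W)) := by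
    ext W
    simp only [Finset.mem_filter, Finset.mem_univ, true_and, Finset.mem_insert]
    constructor
    · intro h
      by_cases hW : v ∈ W
      · left
        rw [← h, sup_eq_left.2 ((hLle W).2 hW)]
      · exact Or.inr ⟨h, hW⟩
    · rintro (rfl | h)
      · exact sup_eq_left.2 ((hLle _).2 hU)
      · exact h.1
  rw [hset, Finset.sum_insert (by simp [hU])]
  have hdim : ∀ W : Submodule (ZMod 2) E, W ⊔ L = U ∧ v ∉ W →
      Module.finrank (ZMod 2) U = Module.finrank (ZMod 2) W + 1 := by
    rintro W ⟨h, hW⟩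
    have h1 := Submodule.finrank_sup_add_finrank_inf_eq W L
    have h2 : W ⊓ L = ⊥ := by
      rw [← disjoint_iff, hLdef, Submodule.disjoint_span_singleton' hv]; exact hW
    rw [h, h2, finrank_bot, hLdef, finrank_span_singleton hv] at h1
    simpa using h1
  have hUpos : 0 < Module.finrank (ZMod 2) U := by
    rw [Module.finrank_pos_iff_exists_ne_zero]
    exact ⟨⟨v, hU⟩, fun h => hv (congrArg Subtype.val h)⟩
  obtain ⟨u, hu⟩ := Nat.exists_eq_succ_of_ne_zero hUpos.ne'
  have hcard := compl_card_rel v hv U hU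
  rw [← hLdef, Nat.card_eq_fintype_card, Fintype.card_subtype, hu, Nat.succ_eq_add_one, pow_succ] at hcard
  have hcard' := Nat.eq_of_mul_eq_mul_right two_pos hcard
  rw [Finset.sum_congr rfl (g := fun _ => cf u)]
  · rw [Finset.sum_const, hcard', hu, nsmul_eq_mul]
    push_cast
    exact cf_succ u
  · intro W hW
    have := hdim W (by simpa using hW)
    congr 1
    omega

open Classical in
lemma mobius_sum [Fintype (Submodule (ZMod 2) E)] (V : Submodule (ZMod 2) E) :
    ∑ W ∈ Finset.univ.filter (fun W : Submodule (ZMod 2) E => W ≤ V),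
      cf (Module.finrank (ZMod 2) W) = if V = ⊥ then 1 else 0 := by
  split_ifs with h
  · subst h
    have : Finset.univ.filter (fun W : Submodule (ZMod 2) E => W ≤ ⊥) = {⊥} := by
      ext W; simp
    rw [this, Finset.sum_singleton, finrank_bot]
    simp [cf]
  · obtain ⟨v, hvV, hv⟩ := (Submodule.ne_bot_iff V).1 h
    rw [← Finset.sum_fiberwise _ (fun W => W ⊔ Submodule.span (ZMod 2) {v})]
    refine Finset.sum_eq_zero fun U _ => ?_
    rw [Finset.filter_filter]
    by_cases hU : v ∈ U ∧ U ≤ V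
    · rw [← fiber_sum v hv U hU.1]
      refine Finset.sum_congr ?_ fun _ _ => rfl
      ext W
      simp only [Finset.mem_filter, Finset.mem_univ, true_and]
      exact ⟨fun h => h.2, fun h => ⟨(le_sup_left.trans h.le).trans hU.2, h⟩⟩
    · rw [Finset.filter_false_of_mem, Finset.sum_empty]
      rintro W _ ⟨hWV, rfl⟩
      apply hU
      refine ⟨Submodule.mem_sup_right (Submodule.mem_span_singleton_self v), ?_⟩
      exact sup_le hWV (by simpa using hvV)

end mob

section goursat
variable {E E₁ E₂ : Type*} [AddCommGroup E] [Module (ZMod 2) E] [Finite E]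
  [AddCommGroup E₁] [Module (ZMod 2) E₁] [Finite E₁]
  [AddCommGroup E₂] [Module (ZMod 2) E₂] [Finite E₂]

open Classical in
lemma goursat_sum [Fintype (Submodule (ZMod 2) E)] [Fintype (Submodule (ZMod 2) E₁)]
    [Fintype (Submodule (ZMod 2) E₂)]
    (p : E →ₗ[ZMod 2] E₁) (q : E →ₗ[ZMod 2] E₂) (hpq : Function.Bijective (p.prod q))
    (A : Submodule (ZMod 2) E₁) (B : Submodule (ZMod 2) E₂) :
    ∑ V ∈ Finset.univ.filter (fun V : Submodule (ZMod 2) E => V.map p = A ∧ V.map q = B),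
      cf (Module.finrank (ZMod 2) V) =
    cf (Module.finrank (ZMod 2) A) * cf (Module.finrank (ZMod 2) B) := by
  set S : Submodule (ZMod 2) E₁ × Submodule (ZMod 2) E₂ → ℂ := fun X =>
    ∑ V ∈ Finset.univ.filter (fun V : Submodule (ZMod 2) E => (V.map p, V.map q) = X),
      cf (Module.finrank (ZMod 2) V) with hS
  set T : Submodule (ZMod 2) E₁ × Submodule (ZMod 2) E₂ → ℂ := fun X =>
    cf (Module.finrank (ZMod 2) X.1) * cf (Module.finrank (ZMod 2) X.2) with hT
  have hsumS : ∀ X, ∑ Y ∈ Finset.univ.filter (fun Y => Y ≤ X), S Y =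
      if X = ⊥ then 1 else 0 := by
    rintro ⟨A, B⟩
    have h1 := mobius_sum (A.comap p ⊓ B.comap q)
    have h2 : A.comap p ⊓ B.comap q = ⊥ ↔ (A, B) = ⊥ := by
      constructor
      · intro h
        rw [Submodule.eq_bot_iff] at h
        refine Prod.ext ((Submodule.eq_bot_iff _).2 fun a ha => ?_)
          ((Submodule.eq_bot_iff _).2 fun b hb => ?_)
        · obtain ⟨x, hx⟩ := hpq.2 (a, 0)
          have hx1 : p x = a := congrArg Prod.fst hx
          have hx2 : q x = 0 := congrArg Prod.snd hx
          have := h x (by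
            refine ⟨?_, ?_⟩
            · simpa [hx1] using ha
            · simp [hx2])
          rw [← hx1, this, map_zero]
        · obtain ⟨x, hx⟩ := hpq.2 (0, b)
          have hx1 : p x = 0 := congrArg Prod.fst hx
          have hx2 : q x = b := congrArg Prod.snd hx
          have := h x (by
            refine ⟨?_, ?_⟩
            · simp [hx1]
            · simpa [hx2] using hb)
          rw [← hx2, this, map_zero]
      · intro h
        obtain ⟨rfl, rfl⟩ : A = ⊥ ∧ B = ⊥ := Prod.ext_iff.1 h
        rw [Submodule.eq_bot_iff]
        rintro x ⟨hx1, hx2⟩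
        apply hpq.1
        rw [map_zero]
        exact Prod.ext (by simpa using hx1) (by simpa using hx2)
    simp only [h2] at h1
    rw [← h1, hS]
    rw [Finset.sum_fiberwise_eq_sum_filter]
    refine Finset.sum_congr ?_ fun _ _ => rfl
    ext V
    simp [Prod.le_def, Submodule.map_le_iff_le_comap]
  have hsumT : ∀ X, ∑ Y ∈ Finset.univ.filter (fun Y => Y ≤ X), T Y =
      if X = ⊥ then 1 else 0 := by
    rintro ⟨A, B⟩
    have h1 := mobius_sum A
    have h2 := mobius_sum B
    have h3 : Finset.univ.filter (fun Y : Submodule (ZMod 2) E₁ × Submodule (ZMod 2) E₂ =>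
        Y ≤ (A, B)) = (Finset.univ.filter (· ≤ A)) ×ˢ (Finset.univ.filter (· ≤ B)) := by
      ext Y; simp [Prod.le_def]
    rw [h3, Finset.sum_product, hT]
    dsimp only
    refine (Finset.sum_mul_sum (Finset.univ.filter (· ≤ A)) (Finset.univ.filter (· ≤ B))
      (fun W => cf (Module.finrank (ZMod 2) W)) (fun W => cf (Module.finrank (ZMod 2) W))).symm.trans
      ?_
    rw [h1, h2]
    have : ((A, B) = ⊥) ↔ A = ⊥ ∧ B = ⊥ := Prod.ext_iff
    simp only [this]
    split_ifs <;> simp_all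
  have hST : ∀ X, S X = T X := by
    intro X
    induction X using WellFoundedLT.induction with
    | ind X ih =>
      have h := (hsumS X).trans (hsumT X).symm
      have hset : Finset.univ.filter (fun Y => Y ≤ X) =
          insert X (Finset.univ.filter (fun Y => Y < X)) := by
        ext Y; simp [le_iff_eq_or_lt]
      rw [hset, Finset.sum_insert (by simp), Finset.sum_insert (by simp),
        Finset.sum_congr rfl (g := T) (fun Y hY => ih Y (by simpa using hY))] at h
      exact add_right_cancel h
  have := hST (A, B)
  simpa [hS, hT, Prod.ext_iff] using this

end goursat

lemma Pset_eq {g : ℕ} (V : Submodule (ZMod 2) (ThetaChar g)) [Fintype V]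
    (τ : Matrix (Fin g) (Fin g) ℂ) :
    Pset (V : Set (ThetaChar g)) τ = ∏ v : V, theta (v : ThetaChar g) τ := by
  rw [Pset, ← finprod_set_coe_eq_finprod_mem, finprod_eq_prod_of_fintype]
  rfl

open Classical in
lemma prod_fiber {E E₁ : Type*} [AddCommGroup E] [Module (ZMod 2) E] [Finite E]
    [AddCommGroup E₁] [Module (ZMod 2) E₁] [Finite E₁] (f : E →ₗ[ZMod 2] E₁)
    (V : Submodule (ZMod 2) E) [Fintype V] [Fintype (V.map f)] (h : E₁ → ℂ) :
    ∏ v : V, h (f v) = (∏ a : V.map f, h a) ^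
      (2 ^ (Module.finrank (ZMod 2) V - Module.finrank (ZMod 2) (V.map f))) := by
  let φ : V →ₗ[ZMod 2] V.map f := f.submoduleMap V
  have hφ : Function.Surjective φ := f.submoduleMap_surjective V
  have hr := LinearMap.finrank_range_add_finrank_ker φ
  rw [LinearMap.range_eq_top.2 hφ, finrank_top] at hr
  have hker : Fintype.card (LinearMap.ker φ) =
      2 ^ (Module.finrank (ZMod 2) V - Module.finrank (ZMod 2) (V.map f)) := by
    rw [← Nat.card_eq_fintype_card, Module.natCard_eq_pow_finrank (K := ZMod 2), Nat.card_zmod]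
    congr 1
    omega
  have hfib : ∀ a : V.map f, (Finset.univ.filter fun v : V => φ v = a).card =
      2 ^ (Module.finrank (ZMod 2) V - Module.finrank (ZMod 2) (V.map f)) := by
    intro a
    rw [← hker, AddMonoidHom.card_fiber_eq_of_mem_range φ (x := a) (y := 0) (hφ a) (hφ 0),
      ← Fintype.card_subtype]
    exact Fintype.card_congr (Equiv.refl _)
  rw [← Finset.prod_fiberwise Finset.univ φ, ← Finset.prod_pow]
  refine Finset.prod_congr rfl fun a _ => ?_
  rw [← hfib a, ← Finset.prod_const]
  refine Finset.prod_congr rfl fun v hv => ?_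
  have : φ v = a := by simpa using hv
  rw [← this]
  rfl

/-- The symplectic form as a bilinear form. -/
def weilForm (g : ℕ) : LinearMap.BilinForm (ZMod 2) (ThetaChar g) :=
  LinearMap.mk₂ (ZMod 2) weil
    (fun a b c => by simp [weil, add_mul, Finset.sum_add_distrib]; ring)
    (fun r a c => by simp [weil, Finset.mul_sum, mul_add, mul_assoc])
    (fun a b c => by simp [weil, mul_add, Finset.sum_add_distrib]; ring)
    (fun r a c => by simp [weil, Finset.mul_sum, mul_add, mul_left_comm])

lemma weilForm_apply (g : ℕ) (v w : ThetaChar g) : weilForm g v w = weil v w := rfl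

lemma weilForm_symm (g : ℕ) : (weilForm g).IsSymm :=
  ⟨fun v w => by
    simp only [weilForm_apply, weil]
    rw [add_comm]
    simp only [mul_comm]⟩

lemma weilForm_nondeg (g : ℕ) : (weilForm g).Nondegenerate := by
  refine (LinearMap.IsRefl.nondegenerate_iff_separatingLeft (B := weilForm g)
    (weilForm_symm g).isRefl).2 ?_
  intro v hv
  refine Prod.ext (funext fun i => ?_) (funext fun i => ?_)
  · have := hv (0, Pi.single i 1)
    simpa [weilForm_apply, weil, Pi.single_apply] using this
  · have := hv (Pi.single i 1, 0)
    simpa [weilForm_apply, weil, Pi.single_apply] using this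

lemma exists_odd {g : ℕ} (V : Submodule (ZMod 2) (ThetaChar g))
    (hV : g < Module.finrank (ZMod 2) V) : ∃ v ∈ V, ¬ evenChar v := by
  by_contra hcon
  push Not at hcon
  have hle : V ≤ (weilForm g).orthogonal V := by
    intro w hw v hv
    have h1 := hcon v hv
    have h2 := hcon w hw
    have h3 := hcon (v + w) (V.add_mem hv hw)
    simp only [evenChar, Prod.fst_add, Prod.snd_add, Pi.add_apply, add_mul, mul_add,
      Finset.sum_add_distrib] at h1 h2 h3
    rw [h1, h2] at h3
    change weil v w = 0
    rw [weil, ← h3]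
    simp only [mul_comm]
    ring
  have h1 := Submodule.finrank_mono hle
  rw [LinearMap.BilinForm.finrank_orthogonal (weilForm_nondeg g)] at h1
  have h2 : Module.finrank (ZMod 2) (ThetaChar g) = g + g := by simp
  omega

lemma Pset_zero {g : ℕ} (V : Submodule (ZMod 2) (ThetaChar g))
    (τ : Matrix (Fin g) (Fin g) ℂ)
    (hV : g < Module.finrank (ZMod 2) V) : Pset (V : Set (ThetaChar g)) τ = 0 := by
  obtain ⟨v, hv, ho⟩ := exists_odd V hV
  have : Fintype V := Fintype.ofFinite V
  rw [Pset_eq]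
  exact Finset.prod_eq_zero (i := (⟨v, hv⟩ : V)) (Finset.mem_univ _) (theta_odd v τ ho)

noncomputable def Qf {g : ℕ} (τ : Matrix (Fin g) (Fin g) ℂ)
    (V : Submodule (ZMod 2) (ThetaChar g)) : ℂ :=
  Pset (V : Set (ThetaChar g)) τ ^ (2 ^ (4 - Module.finrank (ZMod 2) V))

noncomputable instance instFintypeSub (g : ℕ) : Fintype (Submodule (ZMod 2) (ThetaChar g)) :=
  Fintype.ofFinite _

noncomputable def Zf {g : ℕ} (τ : Matrix (Fin g) (Fin g) ℂ) : ℂ :=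
  ∑ V : Submodule (ZMod 2) (ThetaChar g), cf (Module.finrank (ZMod 2) V) * Qf τ V

lemma Zf_eq {g : ℕ} (τ : Matrix (Fin g) (Fin g) ℂ) :
    Zf τ = ∑ i ∈ Finset.range (g + 1), cf i * Gform g i τ := by
  classical
  have hG : ∀ i, cf i * Gform g i τ = ∑ V ∈ Finset.univ.filter
      (fun V : Submodule (ZMod 2) (ThetaChar g) => Module.finrank (ZMod 2) V = i),
        cf (Module.finrank (ZMod 2) V) * Qf τ V := by
    intro i
    rw [Gform, Pform, finsum_mem_eq_finite_toFinset_sum _ (Set.toFinite _), Finset.mul_sum]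
    refine Finset.sum_congr ?_ fun V hV => ?_
    · ext V; simp
    · have : Module.finrank (ZMod 2) V = i := by simpa using hV
      rw [Qf, this]
  simp only [hG]
  rw [Finset.sum_fiberwise_eq_sum_filter, Zf]
  symm
  apply Finset.sum_subset (Finset.filter_subset _ _)
  intro V _ hV
  rw [Qf, Pset_zero V τ (by simpa using hV), zero_pow (by positivity), mul_zero]

lemma Qf_block {k l : ℕ} (hkl : k + l ≤ 4) (τ₁ : Matrix (Fin k) (Fin k) ℂ)
    (τ₂ : Matrix (Fin l) (Fin l) ℂ) (h₁ : IsSiegel τ₁) (h₂ : IsSiegel τ₂)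
    (V : Submodule (ZMod 2) (ThetaChar (k + l))) :
    Qf (blockDiag τ₁ τ₂) V = Qf τ₁ (V.map (chproj1 k l)) * Qf τ₂ (V.map (chproj2 k l)) := by
  classical
  have hP : Pset (V : Set (ThetaChar (k + l))) (blockDiag τ₁ τ₂) =
      Pset (V.map (chproj1 k l) : Set (ThetaChar k)) τ₁ ^
        (2 ^ (Module.finrank (ZMod 2) V - Module.finrank (ZMod 2) (V.map (chproj1 k l)))) *
      Pset (V.map (chproj2 k l) : Set (ThetaChar l)) τ₂ ^
        (2 ^ (Module.finrank (ZMod 2) V - Module.finrank (ZMod 2) (V.map (chproj2 k l)))) := by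
    rw [Pset_eq, Pset_eq, Pset_eq, ← prod_fiber (chproj1 k l) V (fun a => theta a τ₁),
      ← prod_fiber (chproj2 k l) V (fun a => theta a τ₂), ← Finset.prod_mul_distrib]
    exact Finset.prod_congr rfl fun v _ => theta_block τ₁ τ₂ h₁ h₂ v
  by_cases hd : Module.finrank (ZMod 2) V ≤ 4
  · have d1 := Submodule.finrank_map_le (chproj1 k l) V
    have d2 := Submodule.finrank_map_le (chproj2 k l) V
    rw [Qf, hP, mul_pow, ← pow_mul, ← pow_mul, ← pow_add, ← pow_add, Qf, Qf]
    congr 3 <;> omega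
  · have h0 := Pset_zero V (blockDiag τ₁ τ₂) (by omega)
    rw [Qf, h0, zero_pow (by positivity)]
    rw [hP] at h0
    rcases mul_eq_zero.1 h0 with h | h
    · rw [Qf, eq_zero_of_pow_eq_zero h, zero_pow (by positivity), zero_mul]
    · rw [Qf, Qf, eq_zero_of_pow_eq_zero h, zero_pow (by positivity), mul_zero]

lemma chproj_bij (k l : ℕ) : Function.Bijective ((chproj1 k l).prod (chproj2 k l)) := by
  constructor
  · intro v w h
    have h1 : chproj1 k l v = chproj1 k l w := congrArg Prod.fst h
    have h2 : chproj2 k l v = chproj2 k l w := congrArg Prod.snd h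
    refine Prod.ext (funext fun i => ?_) (funext fun i => ?_)
    · refine Fin.addCases (fun i => ?_) (fun i => ?_) i
      · exact congrFun (congrArg Prod.fst h1) i
      · exact congrFun (congrArg Prod.fst h2) i
    · refine Fin.addCases (fun i => ?_) (fun i => ?_) i
      · exact congrFun (congrArg Prod.snd h1) i
      · exact congrFun (congrArg Prod.snd h2) i
  · rintro ⟨a, b⟩
    refine ⟨(Fin.append a.1 b.1, Fin.append a.2 b.2), ?_⟩
    refine Prod.ext (Prod.ext (funext fun i => ?_) (funext fun i => ?_))
      (Prod.ext (funext fun i => ?_) (funext fun i => ?_)) <;>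
    simp [chproj1, chproj2, LinearMap.funLeft]

lemma Zf_block {k l : ℕ} (hkl : k + l ≤ 4) (τ₁ : Matrix (Fin k) (Fin k) ℂ)
    (τ₂ : Matrix (Fin l) (Fin l) ℂ) (h₁ : IsSiegel τ₁) (h₂ : IsSiegel τ₂) :
    Zf (blockDiag τ₁ τ₂) = Zf τ₁ * Zf τ₂ := by
  classical
  have hS : ∀ X : Submodule (ZMod 2) (ThetaChar k) × Submodule (ZMod 2) (ThetaChar l),
      ∑ V ∈ Finset.univ.filter (fun V : Submodule (ZMod 2) (ThetaChar (k + l)) =>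
        (V.map (chproj1 k l), V.map (chproj2 k l)) = X),
        cf (Module.finrank (ZMod 2) V) * Qf (blockDiag τ₁ τ₂) V =
      (cf (Module.finrank (ZMod 2) X.1) * Qf τ₁ X.1) *
        (cf (Module.finrank (ZMod 2) X.2) * Qf τ₂ X.2) := by
    rintro ⟨A, B⟩
    have h := goursat_sum (chproj1 k l) (chproj2 k l) (chproj_bij k l) A B
    have e : (cf (Module.finrank (ZMod 2) A) * Qf τ₁ A) *
        (cf (Module.finrank (ZMod 2) B) * Qf τ₂ B) =
        (cf (Module.finrank (ZMod 2) A) * cf (Module.finrank (ZMod 2) B)) *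
          (Qf τ₁ A * Qf τ₂ B) := by ring
    dsimp only
    rw [e, ← h, Finset.sum_mul]
    refine Finset.sum_congr ?_ fun V hV => ?_
    · ext V; simp [Prod.ext_iff]
    · obtain ⟨rfl, rfl⟩ : V.map (chproj1 k l) = A ∧ V.map (chproj2 k l) = B := by
        simpa using hV
      rw [Qf_block hkl τ₁ τ₂ h₁ h₂]
  rw [Zf, ← Finset.sum_fiberwise Finset.univ
    (fun V : Submodule (ZMod 2) (ThetaChar (k + l)) =>
      (V.map (chproj1 k l), V.map (chproj2 k l)))]
  simp only [hS]
  rw [Fintype.sum_prod_type, Zf, Zf, Finset.sum_mul_sum]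

lemma Xi1_eq (τ : Matrix (Fin 1) (Fin 1) ℂ) : Xi1 τ = (1 / 2) * Zf τ := by
  rw [Zf_eq, Xi1]
  simp [Finset.sum_range_succ, cf, Nat.choose]
  ring

lemma Xi2_eq (τ : Matrix (Fin 2) (Fin 2) ℂ) : Xi2 τ = (1 / 4) * Zf τ := by
  rw [Zf_eq, Xi2]
  simp [Finset.sum_range_succ, cf, Nat.choose]
  ring

lemma Xi3_eq (τ : Matrix (Fin 3) (Fin 3) ℂ) : Xi3 τ = (1 / 8) * Zf τ := by
  rw [Zf_eq, Xi3]
  simp [Finset.sum_range_succ, cf, Nat.choose]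
  ring

lemma Xi4_eq (τ : Matrix (Fin 4) (Fin 4) ℂ) : Xi4 τ = (1 / 16) * Zf τ := by
  rw [Zf_eq, Xi4]
  simp [Finset.sum_range_succ, cf, Nat.choose]
  ring

theorem Xi4_factorization :
    (∀ (τ₁ : Matrix (Fin 1) (Fin 1) ℂ) (τ₂ : Matrix (Fin 3) (Fin 3) ℂ),
      IsSiegel τ₁ → IsSiegel τ₂ → Xi4 (blockDiag τ₁ τ₂) = Xi1 τ₁ * Xi3 τ₂) ∧
    (∀ σ₁ σ₂ : Matrix (Fin 2) (Fin 2) ℂ,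
      IsSiegel σ₁ → IsSiegel σ₂ → Xi4 (blockDiag σ₁ σ₂) = Xi2 σ₁ * Xi2 σ₂) := by
  refine ⟨fun τ₁ τ₂ h₁ h₂ => ?_, fun σ₁ σ₂ h₁ h₂ => ?_⟩
  · have h := Zf_block (k := 1) (l := 3) (by norm_num) τ₁ τ₂ h₁ h₂
    rw [Xi1_eq, Xi3_eq]
    refine (Xi4_eq _).trans ?_
    refine (congrArg (fun z : ℂ => (1 / 16 : ℂ) * z) h).trans ?_
    ring
  · have h := Zf_block (k := 2) (l := 2) (by norm_num) σ₁ σ₂ h₁ h₂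
    rw [Xi2_eq, Xi2_eq]
    refine (Xi4_eq _).trans ?_
    refine (congrArg (fun z : ℂ => (1 / 16 : ℂ) * z) h).trans ?_
    ring
end

section
/- Let V be an 𝔽₂-linear subspace of 𝔽₂^{2g} of dimension i, let τ₁ ∈ ℍ_k and τ₂ ∈ ℍ_{g−k}, let π₁ and π₂ denote the projections of 𝔽₂^{2g} = 𝔽₂^{2k} ⊕ 𝔽₂^{2(g−k)} to the two summands (corresponding to the decomposition of the group of points of order two of a product), and set n := dim π₁(V), m := dim π₂(V). Then for every integer s ≥ 1: P_V(τ₁ ⊕ τ₂)^s = P_{π₁(V)}(τ₁)^{2^{i−n}s} · P_{π₂(V)}(τ₂)^{2^{i−m}s}. -/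
open scoped BigOperators

theorem tsum_mul_tsum_aux {α β : Type*} (f : α → ℂ) (h : β → ℂ) (hf : ∀ a, f a ≠ 0)
    (hh : ∀ b, h b ≠ 0) [Nonempty α] [Nonempty β] :
    (∑' p : α × β, f p.1 * h p.2) = (∑' a, f a) * (∑' b, h b) := by
  by_cases hp : Summable (fun p : α × β => f p.1 * h p.2)
  · have h1 : Summable f := by
      obtain ⟨b⟩ := ‹Nonempty β›
      have := hp.comp_injective (i := fun a : α => (a, b)) (fun x y hxy => by simpa using hxy)
      exact (summable_mul_right_iff (hh b)).1 this
    have h2 : Summable h := by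
      obtain ⟨a⟩ := ‹Nonempty α›
      have := hp.comp_injective (i := fun b : β => (a, b)) (fun x y hxy => by simpa using hxy)
      exact (summable_mul_left_iff (hf a)).1 this
    exact (h1.tsum_mul_tsum h2 hp).symm
  · rw [tsum_eq_zero_of_not_summable hp]
    by_cases h1 : Summable f
    · by_cases h2 : Summable h
      · exact absurd (summable_mul_of_summable_norm h1.norm h2.norm) hp
      · rw [tsum_eq_zero_of_not_summable h2, mul_zero]
    · rw [tsum_eq_zero_of_not_summable h1, zero_mul]

theorem theta_blockDiag {k l : ℕ} (v : ThetaChar (k + l)) (τ₁ : Matrix (Fin k) (Fin k) ℂ)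
    (τ₂ : Matrix (Fin l) (Fin l) ℂ) :
    theta v (blockDiag τ₁ τ₂) = theta (chproj1 k l v) τ₁ * theta (chproj2 k l v) τ₂ := by
  unfold theta
  rw [← tsum_mul_tsum_aux _ _ (fun _ => Complex.exp_ne_zero _) (fun _ => Complex.exp_ne_zero _)]
  rw [← (Fin.appendEquiv (α := ℤ) k l).tsum_eq]
  refine tsum_congr fun p => ?_
  rw [← Complex.exp_add, ← mul_add]
  congr 2
  simp [Fin.sum_univ_add, blockDiag, chproj1, chproj2, LinearMap.funLeft_apply, Fin.appendEquiv]
  ring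

theorem prod_fiber_aux {g h : ℕ} (V : Submodule (ZMod 2) (ThetaChar g))
    (φ : ThetaChar g →ₗ[ZMod 2] ThetaChar h) (f : ThetaChar h → ℂ) :
    (∏ᶠ v ∈ (V : Set (ThetaChar g)), f (φ v)) =
      (∏ᶠ w ∈ (V.map φ : Set (ThetaChar h)), f w) ^
        2 ^ (Module.finrank (ZMod 2) V - Module.finrank (ZMod 2) (V.map φ)) := by
  classical
  let ψ : V →ₗ[ZMod 2] V.map φ := φ.submoduleMap V
  have hψ : Function.Surjective ψ := φ.submoduleMap_surjective V
  have hrank : Module.finrank (ZMod 2) V - Module.finrank (ZMod 2) (V.map φ)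
      = Module.finrank (ZMod 2) (LinearMap.ker ψ) := by
    have h1 := LinearMap.finrank_range_add_finrank_ker ψ
    rw [LinearMap.range_eq_top.2 hψ, finrank_top] at h1
    omega
  have hcard : Fintype.card (LinearMap.ker ψ) =
      2 ^ (Module.finrank (ZMod 2) V - Module.finrank (ZMod 2) (V.map φ)) := by
    rw [hrank, Module.card_eq_pow_finrank (K := ZMod 2), ZMod.card]
  rw [← finprod_set_coe_eq_finprod_mem, ← finprod_set_coe_eq_finprod_mem]
  change (∏ᶠ v : V, f (φ v)) = (∏ᶠ w : V.map φ, f w) ^ _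
  rw [finprod_eq_prod_of_fintype, finprod_eq_prod_of_fintype, ← Finset.prod_pow,
    ← Finset.prod_fiberwise (s := Finset.univ) (g := ψ)]
  refine Finset.prod_congr rfl fun w _ => ?_
  rw [Finset.prod_congr rfl (g := fun _ => f w), Finset.prod_const, ← hcard]
  · congr 1
    obtain ⟨v₀, rfl⟩ := hψ w
    rw [← Fintype.card_coe]
    refine Fintype.card_congr
      { toFun := fun x => ⟨x.1 - v₀, by
          have := (Finset.mem_filter.1 x.2).2
          simp [LinearMap.mem_ker, this]⟩
        invFun := fun y => ⟨y.1 + v₀, by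
          have := LinearMap.mem_ker.1 y.2
          simp [this]⟩
        left_inv := fun x => by simp
        right_inv := fun y => by simp }
  · intro x hx
    rw [← (Finset.mem_filter.1 hx).2]
    rfl

theorem P_V_factorization (k l i n m s : ℕ) (hs : 1 ≤ s)
    (V : Submodule (ZMod 2) (ThetaChar (k + l)))
    (hV : Module.finrank (ZMod 2) ↥V = i)
    (hn : Module.finrank (ZMod 2) ↥(V.map (chproj1 k l)) = n)
    (hm : Module.finrank (ZMod 2) ↥(V.map (chproj2 k l)) = m)
    (τ₁ : Matrix (Fin k) (Fin k) ℂ) (τ₂ : Matrix (Fin l) (Fin l) ℂ)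
    (hτ₁ : IsSiegel τ₁) (hτ₂ : IsSiegel τ₂) :
    Pset (V : Set (ThetaChar (k + l))) (blockDiag τ₁ τ₂) ^ s =
      Pset (V.map (chproj1 k l) : Set (ThetaChar k)) τ₁ ^ (2 ^ (i - n) * s) *
        Pset (V.map (chproj2 k l) : Set (ThetaChar l)) τ₂ ^ (2 ^ (i - m) * s) := by
  subst hV hn hm
  rw [pow_mul, pow_mul, ← mul_pow]
  congr 1
  unfold Pset
  rw [← prod_fiber_aux V (chproj1 k l) (fun w => theta w τ₁),
    ← prod_fiber_aux V (chproj2 k l) (fun w => theta w τ₂),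
    ← finprod_mem_mul_distrib (Set.toFinite _)]
  simp only [theta_blockDiag]
end
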